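/- Let S ⊆ P be a nonempty convex set, let p^0 ∈ P be strictly positive componentwise, and let p̄ minimize D(·, p^0) over S. Then supp(p̄) = ∪_{p ∈ S} supp(p); in particular, every route used by some element of S is used by the KL projection of p^0 onto S. -/

import Mathlib

open Matrix Filter Finset Topology

noncomputable section

variable {A W K : Type*}

/-- OD-route incidence matrix `Σ`: each column is the standard unit vector at `od k`
(every route `k` serves exactly one OD pair, `od k`). -/
def Sig [DecidableEq W] (od : K → W) : Matrix W K ℝ :=
  Matrix.of fun w k => if od k = w then 1 else 0

/-- The strategy set `P = {p : p ≥ 0, Σ p = 1}`. -/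
def Pset [Fintype K] [DecidableEq W] (od : K → W) : Set (K → ℝ) :=
  {p | (∀ k, 0 ≤ p k) ∧ ∀ w : W, (Sig od).mulVec p w = 1}

/-- `q = Σᵀ d`. -/
def qvec [Fintype W] [DecidableEq W] (od : K → W) (d : W → ℝ) : K → ℝ :=
  (Sig od)ᵀ.mulVec d

/-- `bΛ = Λ · diag q`. -/
def bLam [Fintype K] [Fintype W] [DecidableEq W] [DecidableEq K]
    (Λ : Matrix A K ℝ) (od : K → W) (d : W → ℝ) : Matrix A K ℝ :=
  Λ * Matrix.diagonal (qvec od d)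

/-- The link-flow set `X = {bΛ p : p ∈ P}`. -/
def Xset [Fintype K] [Fintype W] [DecidableEq W] [DecidableEq K]
    (Λ : Matrix A K ℝ) (od : K → W) (d : W → ℝ) : Set (A → ℝ) :=
  (fun p => (bLam Λ od d).mulVec p) '' Pset od

/-- The route-cost map `c(p) = Λᵀ u(bΛ p)`. -/
def routeCost [Fintype A] [Fintype K] [Fintype W] [DecidableEq W] [DecidableEq K]
    (Λ : Matrix A K ℝ) (od : K → W) (d : W → ℝ)
    (u : (A → ℝ) → (A → ℝ)) : (K → ℝ) → (K → ℝ) :=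
  fun p => Λᵀ.mulVec (u ((bLam Λ od d).mulVec p))

/-- The UE set `P*`: solutions of the variational inequality. -/
def UEset [Fintype A] [Fintype K] [Fintype W] [DecidableEq W] [DecidableEq K]
    (Λ : Matrix A K ℝ) (od : K → W) (d : W → ℝ)
    (u : (A → ℝ) → (A → ℝ)) : Set (K → ℝ) :=
  {p | p ∈ Pset od ∧ ∀ p' ∈ Pset od, 0 ≤ routeCost Λ od d u p ⬝ᵥ (p' - p)}

/-- The logit map `q_r`. -/
def logit [Fintype K] [DecidableEq W] (od : K → W) (r : ℝ) (s : K → ℝ) : K → ℝ :=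
  fun k => Real.exp (-r * s k) /
    ∑ k' ∈ Finset.univ.filter (fun k' => od k' = od k), Real.exp (-r * s k')

/-- The negative entropy `φ(p) = ∑ₖ qₖ pₖ log pₖ` (with `0·log 0 = 0`). -/
def negEnt [Fintype K] [Fintype W] [DecidableEq W] (od : K → W) (d : W → ℝ)
    (p : K → ℝ) : ℝ :=
  ∑ k, qvec od d k * (p k * Real.log (p k))

/-- The KL divergence `D(p, p') = ∑ₖ qₖ pₖ (log pₖ − log p'ₖ)` (with `0·log 0 = 0`). -/
def KLdiv [Fintype K] [Fintype W] [DecidableEq W] (od : K → W) (d : W → ℝ)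
    (p p' : K → ℝ) : ℝ :=
  ∑ k, qvec od d k * (p k * (Real.log (p k) - Real.log (p' k)))

/-!
Write `p_t = (1 - t) p̄ + t p`. By concavity the entropy at `p_t` is at least its chord, and a
coordinate `k₀` with `p̄ k₀ = 0` contributes the excess `-q k₀ * p k₀ * t log t`, which beats every
linear function of `t` as `t → 0⁺`. So if `p k₀ > 0`, moving from `p̄` towards `p` initially
decreases any convex function minus the entropy. The divergence from a fixed point is such a
difference, with a linear first part.
-/

/-- The entropy `∑ₖ qₖ (-pₖ log pₖ)` of `p` with weights `q`. It is the nonlinear part of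
`-KLdiv`, isolated here for an arbitrary `p ≥ 0`, normalized or not; `0 * log 0 = 0`. -/
def weightedEntropy [Fintype K] (q p : K → ℝ) : ℝ :=
  ∑ k, q k * Real.negMulLog (p k)

theorem nonpos_of_forall_le_mul_log {c m : ℝ}
    (h : ∀ t ∈ Set.Ioc (0 : ℝ) 1, m ≤ c * Real.log t) : c ≤ 0 := by
  by_contra! hc
  have hlim : Tendsto (fun t => c * Real.log t) (𝓝[>] 0) atBot :=
    Real.tendsto_log_nhdsGT_zero.const_mul_atBot hc
  obtain ⟨t, hlt, ht⟩ :=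
    ((hlim.eventually_lt_atBot m).and (Ioc_mem_nhdsGT zero_lt_one)).exists
  exact (h t ht).not_gt hlt

section Entropy

variable [Fintype K] {q : K → ℝ}

theorem le_weightedEntropy_segment (hq : ∀ k, 0 ≤ q k) {a b : K → ℝ} (ha : 0 ≤ a) (hb : 0 ≤ b)
    {k₀ : K} (hak₀ : a k₀ = 0) {t : ℝ} (ht : t ∈ Set.Icc (0 : ℝ) 1) :
    (1 - t) * weightedEntropy q a + t * weightedEntropy q b
        + q k₀ * (b k₀ * Real.negMulLog t) ≤
      weightedEntropy q ((1 - t) • a + t • b) := by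
  let gap : K → ℝ := fun k => Real.negMulLog ((1 - t) * a k + t * b k)
    - ((1 - t) * Real.negMulLog (a k) + t * Real.negMulLog (b k))
  have gap_nonneg (k : K) : 0 ≤ gap k :=
    sub_nonneg.2 <| Real.concaveOn_negMulLog.2 (ha k) (hb k) (sub_nonneg.2 ht.2) ht.1
      (sub_add_cancel 1 t)
  have gap_k₀ : gap k₀ = b k₀ * Real.negMulLog t := by
    simp [gap, hak₀, Real.negMulLog_mul]
  have sum_gap : ∑ k, q k * gap k = weightedEntropy q ((1 - t) • a + t • b)
      - ((1 - t) * weightedEntropy q a + t * weightedEntropy q b) := by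
    simp only [gap, weightedEntropy, Finset.mul_sum, ← Finset.sum_add_distrib,
      ← Finset.sum_sub_distrib, Pi.add_apply, Pi.smul_apply, smul_eq_mul]
    exact Finset.sum_congr rfl fun k _ => by ring
  have le_sum_gap : q k₀ * gap k₀ ≤ ∑ k, q k * gap k :=
    Finset.single_le_sum (fun k _ => mul_nonneg (hq k) (gap_nonneg k)) (Finset.mem_univ k₀)
  rw [gap_k₀, sum_gap] at le_sum_gap
  linarith

theorem pos_of_isMinOn_sub_weightedEntropy (hq : ∀ k, 0 ≤ q k) {S : Set (K → ℝ)}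
    (hS : ∀ p ∈ S, 0 ≤ p) {g : (K → ℝ) → ℝ} (hg : ConvexOn ℝ S g) {pbar p : K → ℝ}
    (hpbar : pbar ∈ S) (hmin : IsMinOn (fun p => g p - weightedEntropy q p) S pbar)
    (hp : p ∈ S) {k : K} (hqk : 0 < q k) (hpk : 0 < p k) : 0 < pbar k := by
  by_contra! hle
  have pbar_k : pbar k = 0 := hle.antisymm (hS pbar hpbar k)
  refine (mul_pos hqk hpk).not_ge (nonpos_of_forall_le_mul_log
    (m := (g pbar - weightedEntropy q pbar) - (g p - weightedEntropy q p)) fun t ht => ?_)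
  have one_sub_nonneg : 0 ≤ 1 - t := sub_nonneg.2 ht.2
  have min_le := isMinOn_iff.1 hmin _
    (hg.1 hpbar hp one_sub_nonneg ht.1.le (sub_add_cancel 1 t))
  have g_le := hg.2 hpbar hp one_sub_nonneg ht.1.le (sub_add_cancel 1 t)
  have entropy_ge := le_weightedEntropy_segment hq (hS pbar hpbar) (hS p hp) pbar_k
    (Set.Ioc_subset_Icc_self ht)
  refine le_of_mul_le_mul_left ?_ ht.1
  simp only [smul_eq_mul, Real.negMulLog] at g_le entropy_ge
  linarith

theorem statement19_general (hq : ∀ k, 0 < q k) {S : Set (K → ℝ)} (hS : ∀ p ∈ S, 0 ≤ p)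
    {g : (K → ℝ) → ℝ} (hg : ConvexOn ℝ S g) {pbar : K → ℝ} (hpbar : pbar ∈ S)
    (hmin : IsMinOn (fun p => g p - weightedEntropy q p) S pbar) :
    {k | 0 < pbar k} = {k | ∃ p ∈ S, 0 < p k} :=
  Set.Subset.antisymm (fun _ hk => ⟨pbar, hpbar, hk⟩) fun k ⟨_, hp, hpk⟩ =>
    pos_of_isMinOn_sub_weightedEntropy (fun k => (hq k).le) hS hg hpbar hmin hp (hq k) hpk

end Entropy

section Demand

variable [Fintype W] [DecidableEq W] (od : K → W)

theorem qvec_apply (d : W → ℝ) (k : K) : qvec od d k = d (od k) := by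
  simp [qvec, Sig, Matrix.mulVec, dotProduct]

theorem KLdiv_eq_dotProduct_sub_weightedEntropy [Fintype K] (d : W → ℝ) (p p0 : K → ℝ) :
    KLdiv od d p p0 =
      (fun k => -(qvec od d k * Real.log (p0 k))) ⬝ᵥ p - weightedEntropy (qvec od d) p := by
  simp only [KLdiv, weightedEntropy, dotProduct, Real.negMulLog, ← Finset.sum_sub_distrib]
  exact Finset.sum_congr rfl fun k _ => by ring

end Demand

/-- let `S ⊆ P` be a nonempty convex set, `p⁰ ∈ P` strictly
positive, and let `p̄` minimize `D(·, p⁰)` over `S`. Then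
`supp p̄ = ⋃_{p ∈ S} supp p`: every route used by some element of `S` is used by the
KL projection of `p⁰` onto `S`. -/
theorem statement19
    [Fintype W] [Fintype K] [DecidableEq W]
    (od : K → W) (d : W → ℝ)
    (hd : ∀ w, 0 < d w)
    (S : Set (K → ℝ)) (hS : S ⊆ Pset od) (hSne : S.Nonempty) (hSconv : Convex ℝ S)
    (p0 : K → ℝ) (hp0 : p0 ∈ Pset od) (hp0pos : ∀ k, 0 < p0 k)
    (pbar : K → ℝ) (hmem : pbar ∈ S)
    (hmin : ∀ p ∈ S, KLdiv od d pbar p0 ≤ KLdiv od d p p0) :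
    {k | 0 < pbar k} = {k | ∃ p ∈ S, 0 < p k} := by
  simp only [KLdiv_eq_dotProduct_sub_weightedEntropy] at hmin
  exact statement19_general (fun k => qvec_apply od d k ▸ hd (od k)) (fun _ hp => (hS hp).1)
    ((dotProductBilin ℝ ℝ _).convexOn hSconv) hmem (isMinOn_iff.2 hmin)
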